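/- arXiv:math/0601361 — 4 statements merged into one kernel-verified Lean document; each statement's English description precedes it below -/
import Mathlib

section
/- For every n ≥ 4, the distinguishing number of the n-dimensional hypercube satisfies D(Q_n) = 2. -/
/-- A permutation of the vertices is an automorphism of `G` iff it preserves adjacency. -/
def IsAuto {V : Type*} (G : SimpleGraph V) (π : Equiv.Perm V) : Prop :=
  ∀ v w, G.Adj (π v) (π w) ↔ G.Adj v w

/-- A coloring `c : V → Fin r` is distinguishing if no nontrivial automorphism preserves it. -/
def IsDistinguishing {V : Type*} (G : SimpleGraph V) {r : ℕ} (c : V → Fin r) : Prop :=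
  ∀ π : Equiv.Perm V, IsAuto G π → (∀ v, c (π v) = c v) → π = 1

/-- The distinguishing number `D(G)`: the least `r` admitting a distinguishing `r`-coloring. -/
noncomputable def distNum {V : Type*} (G : SimpleGraph V) : ℕ :=
  sInf {r : ℕ | ∃ c : V → Fin r, IsDistinguishing G c}

/-- The `n`-dimensional hypercube: vertices are `{0,1}^n`, adjacent iff they differ in
exactly one coordinate. -/
def Q (n : ℕ) : SimpleGraph (Fin n → Bool) where
  Adj v w := (Finset.univ.filter fun i => v i ≠ w i).card = 1
  symm := by
    constructor
    intro v w h
    rw [show (Finset.univ.filter fun i => w i ≠ v i) = (Finset.univ.filter fun i => v i ≠ w i) from by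
      apply Finset.filter_congr; intro i _; simp [ne_comm]]
    exact h
  loopless := by constructor; intro v h; simp at h

/-!
Automorphisms of the hypercube are isometries for the Hamming distance. Write `p k` for the vertex
`1ᵏ0ⁿ⁻ᵏ`. The geodesic path `p 0, …, p (n - 1)` resolves the cube: the coordinate `x k` is read off
by comparing the distances of `x` to `p k` and `p (k + 1)`, and the distance to `p n` is determined
by that to its antipode `p 0`. So an isometry fixing the path pointwise is the identity, and one
that merely preserves the path either fixes it pointwise or reverses it. Colour the path together
with the antipode `(p 1)ᶜ` of `p 1`. This extra vertex is isolated among the coloured ones, hence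
fixed, and its distances `n - 1` and `2` to the two ends of the path differ, which rules out the
reversal.

One colour is not enough, because complementing all coordinates is a nontrivial automorphism.
-/

section Hamming

variable {ι : Type*} [Fintype ι] {β : ι → Type*} [∀ i, DecidableEq (β i)]

theorem hammingDist_update_add_one [DecidableEq ι] {x y : ∀ i, β i} {i : ι} (h : x i ≠ y i) :
    hammingDist x (Function.update y i (x i)) + 1 = hammingDist x y := by
  have hdiff : ({j | x j ≠ y j} : Finset ι) =
      insert i ({j | x j ≠ Function.update y i (x i) j} : Finset ι) := by
    ext j
    by_cases hj : j = i
    · subst hj; simp [h]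
    · simp [hj]
  unfold hammingDist
  rw [hdiff, Finset.card_insert_of_notMem (by simp)]

theorem hammingDist_update_self [DecidableEq ι] {y : ∀ i, β i} {i : ι} {a : β i} (h : a ≠ y i) :
    hammingDist (Function.update y i a) y = 1 := by
  have hne : Function.update y i a i ≠ y i := by simpa using h
  simpa using (hammingDist_update_add_one hne).symm

theorem hammingDist_map_le_of_hammingDist_eq_one {κ : Type*} [Fintype κ] {γ : κ → Type*}
    [∀ j, DecidableEq (γ j)] {f : (∀ i, β i) → ∀ j, γ j}
    (hf : ∀ x y, hammingDist x y = 1 → hammingDist (f x) (f y) ≤ 1) (x y : ∀ i, β i) :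
    hammingDist (f x) (f y) ≤ hammingDist x y := by
  classical
  induction hd : hammingDist x y generalizing y with
  | zero => simp [hammingDist_eq_zero.1 hd]
  | succ d ih =>
    obtain ⟨i, hi⟩ : ∃ i, x i ≠ y i := Function.ne_iff.1 (hammingDist_ne_zero.1 (by omega))
    let z := Function.update y i (x i)
    have hxz : hammingDist x z = d := by
      have : hammingDist x z + 1 = hammingDist x y := hammingDist_update_add_one hi
      omega
    calc hammingDist (f x) (f y)
        ≤ hammingDist (f x) (f z) + hammingDist (f z) (f y) := hammingDist_triangle _ _ _
      _ ≤ d + 1 := add_le_add (ih z hxz) (hf z y (hammingDist_update_self hi))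

theorem hammingDist_add_hammingDist_compl (x y : ι → Bool) :
    hammingDist x y + hammingDist xᶜ y = Fintype.card ι := by
  have hcompl (i : ι) : xᶜ i ≠ y i ↔ ¬x i ≠ y i := by
    cases hx : x i <;> cases hy : y i <;> simp [hx]
  simp only [hammingDist, hcompl]
  exact Finset.card_filter_add_card_filter_not _

theorem hammingDist_compl_compl (x y : ι → Bool) : hammingDist xᶜ yᶜ = hammingDist x y :=
  hammingDist_comp (fun _ => compl) fun _ => compl_injective

end Hamming

section DistinguishingNumber

variable {V : Type*} {G : SimpleGraph V}

theorem IsAuto.symm {π : Equiv.Perm V} (hπ : IsAuto G π) : IsAuto G π.symm := fun v w => by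
  simpa using (hπ (π.symm v) (π.symm w)).symm

theorem exists_isDistinguishing_two_of_set (S : Set V)
    (hS : ∀ π : Equiv.Perm V, IsAuto G π → Set.MapsTo π S S → π = 1) :
    ∃ c : V → Fin 2, IsDistinguishing G c := by
  classical
  refine ⟨fun v => if v ∈ S then 1 else 0, fun π hπ hc => hS π hπ fun v hv => ?_⟩
  by_contra hπv
  simpa [hv, hπv] using hc v

theorem IsDistinguishing.two_le {r : ℕ} {c : V → Fin r} (hc : IsDistinguishing G c)
    {π : Equiv.Perm V} (hπ : IsAuto G π) (hne : π ≠ 1) : 2 ≤ r := by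
  by_contra hr
  have : Subsingleton (Fin r) := Fin.subsingleton_iff_le_one.2 (by omega)
  exact hne (hc π hπ fun _ => Subsingleton.elim _ _)

theorem distNum_eq_two (hc : ∃ c : V → Fin 2, IsDistinguishing G c) {π : Equiv.Perm V}
    (hπ : IsAuto G π) (hne : π ≠ 1) : distNum G = 2 :=
  le_antisymm (Nat.sInf_le hc) (le_csInf ⟨2, hc⟩ fun _ ⟨_, hc'⟩ => hc'.two_le hπ hne)

end DistinguishingNumber

section Automorphisms

variable {n : ℕ}

theorem Q_adj_iff {v w : Fin n → Bool} : (Q n).Adj v w ↔ hammingDist v w = 1 := Iff.rfl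

theorem IsAuto.hammingDist_le {π : Equiv.Perm (Fin n → Bool)} (hπ : IsAuto (Q n) π)
    (v w : Fin n → Bool) : hammingDist (π v) (π w) ≤ hammingDist v w :=
  hammingDist_map_le_of_hammingDist_eq_one
    (fun v w hvw => (Q_adj_iff.1 ((hπ v w).2 (Q_adj_iff.2 hvw))).le) v w

theorem IsAuto.hammingDist_eq {π : Equiv.Perm (Fin n → Bool)} (hπ : IsAuto (Q n) π)
    (v w : Fin n → Bool) : hammingDist (π v) (π w) = hammingDist v w :=
  le_antisymm (hπ.hammingDist_le v w) (by simpa using hπ.symm.hammingDist_le (π v) (π w))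

theorem isAuto_compl : IsAuto (Q n) (compl_involutive.toPerm compl) := fun v w => by
  simp only [Q_adj_iff, Function.Involutive.coe_toPerm, hammingDist_compl_compl]

theorem compl_toPerm_ne_one {α : Type*} [BooleanAlgebra α] [Nontrivial α] :
    (compl_involutive.toPerm compl : Equiv.Perm α) ≠ 1 := fun h =>
  compl_ne_self (DFunLike.congr_fun h ⊥)

end Automorphisms

section PrefixPath

variable {n : ℕ}

/-- The vertex `1ᵏ0ⁿ⁻ᵏ` of the hypercube. For `k ≤ n` these vertices form a geodesic path between
two antipodes; for `k ≥ n` the vertex is constantly `true`. -/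
def prefixVertex (n k : ℕ) : Fin n → Bool := fun i => decide (i.val < k)

theorem prefixVertex_succ (i : Fin n) :
    prefixVertex n (i + 1) = Function.update (prefixVertex n i) i true := by
  ext j
  by_cases hj : j = i
  · subst hj; simp [prefixVertex]
  · have : j.val ≠ i.val := Fin.val_ne_of_ne hj
    simp only [prefixVertex, Function.update_of_ne hj]
    grind

theorem update_prefixVertex_succ (i : Fin n) :
    Function.update (prefixVertex n (i + 1)) i false = prefixVertex n i := by
  simp [prefixVertex_succ, prefixVertex]

theorem compl_prefixVertex_zero : (prefixVertex n 0)ᶜ = prefixVertex n n := by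
  ext i
  simp [prefixVertex]

theorem hammingDist_prefixVertex_succ_of_true {x : Fin n → Bool} {i : Fin n} (hx : x i = true) :
    hammingDist x (prefixVertex n (i + 1)) + 1 = hammingDist x (prefixVertex n i) := by
  rw [prefixVertex_succ, ← hx]
  exact hammingDist_update_add_one (by simp [hx, prefixVertex])

theorem hammingDist_prefixVertex_succ_of_false {x : Fin n → Bool} {i : Fin n} (hx : x i = false) :
    hammingDist x (prefixVertex n (i + 1)) = hammingDist x (prefixVertex n i) + 1 := by
  rw [← update_prefixVertex_succ, ← hx]
  exact (hammingDist_update_add_one (by simp [hx, prefixVertex])).symm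

theorem hammingDist_prefixVertex_succ_lt_iff {x : Fin n → Bool} {i : Fin n} :
    hammingDist x (prefixVertex n (i + 1)) < hammingDist x (prefixVertex n i) ↔ x i = true := by
  cases hx : x i
  · simp [hammingDist_prefixVertex_succ_of_false hx]
  · simp [← hammingDist_prefixVertex_succ_of_true hx]

theorem hammingDist_prefixVertex_of_le {j k : ℕ} (hjk : j ≤ k) (hk : k ≤ n) :
    hammingDist (prefixVertex n j) (prefixVertex n k) = k - j := by
  induction k, hjk using Nat.le_induction with
  | base => simp
  | succ k hjk ih =>
    have hfalse : prefixVertex n j ⟨k, hk⟩ = false := by simpa [prefixVertex] using hjk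
    have hstep := hammingDist_prefixVertex_succ_of_false hfalse
    have := ih (by omega)
    dsimp only at hstep
    omega

theorem hammingDist_prefixVertex {j k : ℕ} (hj : j ≤ n) (hk : k ≤ n) :
    hammingDist (prefixVertex n j) (prefixVertex n k) = Nat.dist j k := by
  rcases le_total j k with hjk | hkj
  · rw [hammingDist_prefixVertex_of_le hjk hk, Nat.dist_eq_sub_of_le hjk]
  · rw [hammingDist_comm, hammingDist_prefixVertex_of_le hkj hj, Nat.dist_eq_sub_of_le_right hkj]

theorem hammingDist_compl_prefixVertex {j k : ℕ} (hj : j ≤ n) (hk : k ≤ n) :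
    hammingDist (prefixVertex n j)ᶜ (prefixVertex n k) = n - Nat.dist j k := by
  have := hammingDist_add_hammingDist_compl (prefixVertex n j) (prefixVertex n k)
  rw [hammingDist_prefixVertex hj hk, Fintype.card_fin] at this
  omega

theorem eq_of_forall_hammingDist_prefixVertex_eq {x y : Fin n → Bool}
    (h : ∀ k < n, hammingDist x (prefixVertex n k) = hammingDist y (prefixVertex n k)) :
    x = y := by
  ext i
  have hn : 0 < n := i.pos
  have hlast : hammingDist x (prefixVertex n n) = hammingDist y (prefixVertex n n) := by
    have hx := hammingDist_add_hammingDist_compl (prefixVertex n 0) x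
    have hy := hammingDist_add_hammingDist_compl (prefixVertex n 0) y
    rw [compl_prefixVertex_zero, hammingDist_comm, hammingDist_comm _ x] at hx
    rw [compl_prefixVertex_zero, hammingDist_comm, hammingDist_comm _ y] at hy
    have := h 0 hn
    omega
  have hall (k : ℕ) (hk : k ≤ n) :
      hammingDist x (prefixVertex n k) = hammingDist y (prefixVertex n k) :=
    hk.lt_or_eq.elim (h k) fun hkn => hkn ▸ hlast
  rw [Bool.eq_iff_iff, ← hammingDist_prefixVertex_succ_lt_iff,
    ← hammingDist_prefixVertex_succ_lt_iff, hall i i.2.le, hall (i + 1) i.2]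

end PrefixPath

section RigidSet

variable {n : ℕ} {f : (Fin n → Bool) → Fin n → Bool}

/-- The vertices of the first colour in the distinguishing colouring: the path `1ᵏ0ⁿ⁻ᵏ`, `k < n`,
and the antipode of its second vertex. -/
def rigidSet (n : ℕ) : Set (Fin n → Bool) :=
  insert (prefixVertex n 1)ᶜ (prefixVertex n '' Set.Iio n)

theorem prefixVertex_mem_rigidSet {k : ℕ} (hk : k < n) : prefixVertex n k ∈ rigidSet n :=
  Or.inr ⟨k, hk, rfl⟩

theorem hammingDist_compl_prefixVertex_one_ne_one (hn : 3 ≤ n) {v : Fin n → Bool}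
    (hv : v ∈ rigidSet n) : hammingDist (prefixVertex n 1)ᶜ v ≠ 1 := by
  rcases hv with rfl | ⟨k, hk, rfl⟩
  · simp
  · have hk : k < n := hk
    rw [hammingDist_compl_prefixVertex (by omega) hk.le, Nat.dist]
    omega

theorem exists_map_prefixVertex_eq (hn : 3 ≤ n)
    (hf : ∀ x y, hammingDist (f x) (f y) = hammingDist x y)
    (hS : Set.MapsTo f (rigidSet n) (rigidSet n)) {k : ℕ} (hk : k < n) :
    ∃ m < n, f (prefixVertex n k) = prefixVertex n m := by
  rcases hS (prefixVertex_mem_rigidSet hk) with hisolated | ⟨m, hm, hfm⟩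
  · obtain ⟨j, hj, hjk⟩ : ∃ j < n, Nat.dist k j = 1 := by
      rcases k with _ | k
      · exact ⟨1, by omega, rfl⟩
      · exact ⟨k, by omega, by simp [Nat.dist]⟩
    have hadj := hf (prefixVertex n k) (prefixVertex n j)
    rw [hisolated, hammingDist_prefixVertex hk.le hj.le, hjk] at hadj
    exact absurd hadj
      (hammingDist_compl_prefixVertex_one_ne_one hn (hS (prefixVertex_mem_rigidSet hj)))
  · exact ⟨m, hm, hfm.symm⟩

theorem map_compl_prefixVertex_one (hn : 3 ≤ n)
    (hf : ∀ x y, hammingDist (f x) (f y) = hammingDist x y)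
    (hS : Set.MapsTo f (rigidSet n) (rigidSet n)) :
    f (prefixVertex n 1)ᶜ = (prefixVertex n 1)ᶜ := by
  rcases hS (Set.mem_insert _ _) with hfix | ⟨j, hj, hfj⟩
  · exact hfix
  · have hj : j < n := hj
    obtain ⟨m, hm, hfm⟩ := exists_map_prefixVertex_eq hn hf hS (k := 1) (by omega)
    -- Two vertices of the path are at distance less than `n`, so they are not antipodes.
    have hanti := hf (prefixVertex n 1)ᶜ (prefixVertex n 1)
    rw [← hfj, hfm, hammingDist_prefixVertex hj.le hm.le,
      hammingDist_compl_prefixVertex (by omega) (by omega)] at hanti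
    simp only [Nat.dist] at hanti
    omega

theorem map_prefixVertex_zero (hn : 4 ≤ n)
    (hf : ∀ x y, hammingDist (f x) (f y) = hammingDist x y)
    (hS : Set.MapsTo f (rigidSet n) (rigidSet n)) :
    f (prefixVertex n 0) = prefixVertex n 0 := by
  obtain ⟨a, ha, hfa⟩ := exists_map_prefixVertex_eq (by omega) hf hS (k := 0) (by omega)
  obtain ⟨b, hb, hfb⟩ := exists_map_prefixVertex_eq (by omega) hf hS (k := n - 1) (by omega)
  have hends := hf (prefixVertex n 0) (prefixVertex n (n - 1))
  rw [hfa, hfb, hammingDist_prefixVertex ha.le hb.le,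
    hammingDist_prefixVertex (by omega) (by omega)] at hends
  have hextra := hf (prefixVertex n 1)ᶜ (prefixVertex n 0)
  rw [map_compl_prefixVertex_one (by omega) hf hS, hfa,
    hammingDist_compl_prefixVertex (by omega) ha.le,
    hammingDist_compl_prefixVertex (by omega) (by omega)] at hextra
  obtain rfl : a = 0 := by
    simp only [Nat.dist] at hends hextra
    omega
  exact hfa

theorem map_prefixVertex (hn : 4 ≤ n)
    (hf : ∀ x y, hammingDist (f x) (f y) = hammingDist x y)
    (hS : Set.MapsTo f (rigidSet n) (rigidSet n)) {k : ℕ} (hk : k < n) :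
    f (prefixVertex n k) = prefixVertex n k := by
  obtain ⟨m, hm, hfm⟩ := exists_map_prefixVertex_eq (by omega) hf hS hk
  have hdist := hf (prefixVertex n 0) (prefixVertex n k)
  rw [map_prefixVertex_zero hn hf hS, hfm, hammingDist_prefixVertex n.zero_le hm.le,
    hammingDist_prefixVertex n.zero_le hk.le] at hdist
  obtain rfl : m = k := by simpa [Nat.dist] using hdist
  exact hfm

theorem eq_id_of_mapsTo_rigidSet (hn : 4 ≤ n)
    (hf : ∀ x y, hammingDist (f x) (f y) = hammingDist x y)
    (hS : Set.MapsTo f (rigidSet n) (rigidSet n)) : f = id := by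
  funext x
  refine eq_of_forall_hammingDist_prefixVertex_eq fun k hk => ?_
  calc hammingDist (f x) (prefixVertex n k)
      = hammingDist (f x) (f (prefixVertex n k)) := by rw [map_prefixVertex hn hf hS hk]
    _ = hammingDist x (prefixVertex n k) := hf _ _

theorem exists_isDistinguishing_Q (hn : 4 ≤ n) :
    ∃ c : (Fin n → Bool) → Fin 2, IsDistinguishing (Q n) c :=
  exists_isDistinguishing_two_of_set (rigidSet n) fun _ hπ hS =>
    DFunLike.coe_injective (eq_id_of_mapsTo_rigidSet hn hπ.hammingDist_eq hS)

end RigidSet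

theorem stmt_2 (n : ℕ) (hn : 4 ≤ n) : distNum (Q n) = 2 := by
  have : NeZero n := ⟨by omega⟩
  exact distNum_eq_two (exists_isDistinguishing_Q hn) isAuto_compl compl_toPerm_ne_one
end

section
/- Let n and p be integers with 2 < p < n−1 and p even. A permutation π of {0,1}^n is an automorphism of Q_n^p if and only if it is an automorphism of Q_n^2; that is, Aut(Q_n^p) and Aut(Q_n^2) are the same subgroup of the permutation group on the vertex set. -/
/-- The p-th power of a graph `G`: distinct vertices are adjacent iff their
distance in `G` satisfies `0 < d_G(v,w) ≤ p` (in particular they are reachable). -/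
def gpow {V : Type*} (G : SimpleGraph V) (p : ℕ) : SimpleGraph V where
  Adj v w := v ≠ w ∧ G.Reachable v w ∧ G.dist v w ≤ p
  symm := ⟨fun v w h => ⟨h.1.symm, h.2.1.symm, by rw [SimpleGraph.dist_comm]; exact h.2.2⟩⟩
  loopless := ⟨fun v h => h.1 rfl⟩

/-!
For every graph `G` one has `(G^k)^m = G^(k m)`, so automorphisms of `Q_n^2` are automorphisms of
`Q_n^p` for `p` even. Conversely, an automorphism of `Q_n^p` preserves the number of common points
of the Hamming balls of radius `p` about two vertices. Since the hypercube is distance-transitive,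
this number depends only on the distance of the two vertices. It is non-increasing in the distance,
and drops strictly from distance `2` to distance `3` if `p + 2 ≤ n`; hence it tells whether two
vertices are at distance at most `2`.
-/

open Finset

section GraphPower

variable {V : Type*} {G : SimpleGraph V} {v w : V}

lemma gpow_adj_iff_exists_walk {p : ℕ} :
    (gpow G p).Adj v w ↔ v ≠ w ∧ ∃ q : G.Walk v w, q.length ≤ p := by
  refine and_congr_right fun _ => ⟨?_, ?_⟩
  · rintro ⟨hvw, hp⟩
    obtain ⟨q, hq⟩ := hvw.exists_walk_length_eq_dist
    exact ⟨q, hq.trans_le hp⟩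
  · rintro ⟨q, hq⟩
    exact ⟨q.reachable, (SimpleGraph.dist_le q).trans hq⟩

lemma exists_walk_length_le_mul_of_gpow_walk {k : ℕ} (q : (gpow G k).Walk v w) :
    ∃ r : G.Walk v w, r.length ≤ k * q.length := by
  induction q with
  | nil => exact ⟨.nil, by simp⟩
  | cons h q ih =>
    obtain ⟨-, s, hs⟩ := gpow_adj_iff_exists_walk.1 h
    obtain ⟨r, hr⟩ := ih
    refine ⟨s.append r, ?_⟩
    rw [SimpleGraph.Walk.length_append, SimpleGraph.Walk.length_cons, mul_add_one]
    omega

lemma exists_gpow_walk_length_le {k m : ℕ} (r : G.Walk v w) (hr : r.length ≤ k * m) :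
    ∃ q : (gpow G k).Walk v w, q.length ≤ m := by
  induction m generalizing v with
  | zero =>
    obtain rfl := r.eq_of_length_eq_zero (by simpa using hr)
    exact ⟨.nil, le_rfl⟩
  | succ m ih =>
    obtain ⟨q, hq⟩ := ih (r.drop k) (by rw [r.drop_length, tsub_le_iff_right]; exact hr)
    by_cases hu : v = r.getVert k
    · exact ⟨q.copy hu.symm rfl, by simpa using hq.trans m.le_succ⟩
    · have hadj : (gpow G k).Adj v (r.getVert k) :=
        gpow_adj_iff_exists_walk.2 ⟨hu, r.take k, by simp [r.take_length]⟩
      exact ⟨.cons hadj q, by simpa using hq⟩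

theorem gpow_gpow (G : SimpleGraph V) (k m : ℕ) : gpow (gpow G k) m = gpow G (k * m) := by
  ext v w
  rw [gpow_adj_iff_exists_walk, gpow_adj_iff_exists_walk]
  refine and_congr_right fun _ => ⟨?_, ?_⟩
  · rintro ⟨q, hq⟩
    obtain ⟨r, hr⟩ := exists_walk_length_le_mul_of_gpow_walk q
    exact ⟨r, hr.trans (Nat.mul_le_mul_left k hq)⟩
  · rintro ⟨r, hr⟩
    exact exists_gpow_walk_length_le r hr

theorem IsAuto.gpow {π : Equiv.Perm V} (hπ : IsAuto G π) (p : ℕ) : IsAuto (gpow G p) π := by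
  intro v w
  let φ : G ≃g G := ⟨π, hπ _ _⟩
  rw [gpow_adj_iff_exists_walk, gpow_adj_iff_exists_walk, π.injective.ne_iff]
  refine and_congr_right fun _ => ⟨?_, ?_⟩
  · rintro ⟨q, hq⟩
    exact ⟨(q.map φ.symm.toHom).copy (φ.symm_apply_apply v) (φ.symm_apply_apply w),
      by simpa using hq⟩
  · rintro ⟨q, hq⟩
    exact ⟨q.map φ.toHom, by simpa using hq⟩

end GraphPower

namespace Hypercube

section HammingSpace

variable {ι α : Type*} [Fintype ι] [DecidableEq α]

lemma card_filter_eq_add_hammingDist (x y : ι → α) :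
    #{i | x i = y i} + hammingDist x y = Fintype.card ι :=
  card_filter_add_card_filter_not _

lemma hammingDist_comp_perm (σ : Equiv.Perm ι) (x y : ι → α) :
    hammingDist (x ∘ σ) (y ∘ σ) = hammingDist x y :=
  card_equiv σ fun i => by simp

lemma exists_perm_ne_iff_of_hammingDist_eq {x y x' y' : ι → α}
    (h : hammingDist x y = hammingDist x' y') :
    ∃ σ : Equiv.Perm ι, ∀ i, x (σ i) ≠ y (σ i) ↔ x' i ≠ y' i := by
  obtain ⟨σ, hσ⟩ := Equiv.Perm.exists_map_finset_eq
    ({i | x' i ≠ y' i} : Finset ι) ({i | x i ≠ y i} : Finset ι) h.symm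
  refine ⟨σ, fun i => ?_⟩
  simpa using (Finset.ext_iff.1 hσ (σ i)).symm

omit [DecidableEq α] in
lemma exists_perm_apply_eq_apply_eq {a b a' b' : α} (h : a = b ↔ a' = b') :
    ∃ τ : Equiv.Perm α, τ a = a' ∧ τ b = b' := by
  classical
  refine ⟨Equiv.swap (Equiv.swap a a' b) b' * Equiv.swap a a', ?_, ?_⟩ <;>
    grind [Equiv.Perm.mul_apply]

theorem exists_perm_hammingDist_eq_of_hammingDist_eq {x y x' y' : ι → α}
    (h : hammingDist x y = hammingDist x' y') :
    ∃ e : Equiv.Perm (ι → α),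
      (∀ a b, hammingDist (e a) (e b) = hammingDist a b) ∧ e x = x' ∧ e y = y' := by
  obtain ⟨σ, hσ⟩ := exists_perm_ne_iff_of_hammingDist_eq h
  choose τ hτx hτy using fun i => exists_perm_apply_eq_apply_eq (not_iff_not.1 (hσ i))
  refine ⟨(σ.symm.arrowCongr (Equiv.refl α)).trans (Equiv.piCongrRight τ), fun a b => ?_,
    funext hτx, funext hτy⟩
  exact (hammingDist_comp (fun i => τ i) fun i => (τ i).injective).trans
    (hammingDist_comp_perm σ a b)

variable [DecidableEq ι] [Fintype α] {p : ℕ}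

/-- The intersection of the closed Hamming balls of radius `p` about `x` and `y`. -/
def commonBall (p : ℕ) (x y : ι → α) : Finset (ι → α) :=
  {z | hammingDist x z ≤ p ∧ hammingDist y z ≤ p}

lemma card_commonBall_map (e : Equiv.Perm (ι → α))
    (he : ∀ a b, hammingDist (e a) (e b) ≤ p ↔ hammingDist a b ≤ p) (x y : ι → α) :
    #(commonBall p (e x) (e y)) = #(commonBall p x y) :=
  (card_equiv e fun z => by simp [commonBall, he]).symm

lemma card_commonBall_congr {x y x' y' : ι → α} (h : hammingDist x y = hammingDist x' y') :
    #(commonBall p x y) = #(commonBall p x' y') := by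
  obtain ⟨e, he, rfl, rfl⟩ := exists_perm_hammingDist_eq_of_hammingDist_eq h
  exact (card_commonBall_map e (fun a b => by rw [he]) x y).symm

end HammingSpace

section Flip

variable {ι : Type*} [DecidableEq ι] {i : ι} {s : Finset ι} {x y : ι → Bool}

/-- The vertex obtained from `x` by switching the coordinates in `s`. -/
def flipOn (s : Finset ι) (x : ι → Bool) : ι → Bool :=
  fun i => if i ∈ s then !x i else x i

lemma flipOn_of_mem (hi : i ∈ s) : flipOn s x i = !x i := if_pos hi

lemma flipOn_of_notMem (hi : i ∉ s) : flipOn s x i = x i := if_neg hi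

@[simp]
lemma flipOn_flipOn (s : Finset ι) (x : ι → Bool) : flipOn s (flipOn s x) = x := by
  ext i
  by_cases hi : i ∈ s <;> simp [flipOn, hi]

lemma exists_eq_flipOn_singleton_of_ne (h : x ≠ y) :
    ∃ i y', x i = y' i ∧ y = flipOn {i} y' := by
  obtain ⟨i, hi⟩ := Function.ne_iff.1 h
  refine ⟨i, flipOn {i} y, ?_, (flipOn_flipOn {i} y).symm⟩
  rw [flipOn_of_mem (mem_singleton_self i)]
  exact Bool.eq_not.2 hi

variable [Fintype ι] {p : ℕ}

lemma hammingDist_flipOn_flipOn (s : Finset ι) (x y : ι → Bool) :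
    hammingDist (flipOn s x) (flipOn s y) = hammingDist x y :=
  hammingDist_comp (fun i b => if i ∈ s then !b else b) fun i => by
    by_cases hi : i ∈ s <;> simp [hi, Function.Injective]

lemma hammingDist_flipOn_of_eq (h : ∀ i ∈ s, x i = y i) :
    hammingDist x (flipOn s y) = hammingDist x y + #s := by
  have hdisj : Disjoint (α := Finset ι) {i | x i ≠ y i} s :=
    disjoint_left.2 fun i hi his => (mem_filter.1 hi).2 (h i his)
  unfold hammingDist
  rw [← card_union_of_disjoint hdisj]
  congr 1
  ext i
  by_cases hi : i ∈ s
  · simp [flipOn_of_mem hi, hi, h i hi]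
  · simp [flipOn_of_notMem hi, hi]

lemma hammingDist_flipOn_singleton_of_eq (h : x i = y i) :
    hammingDist x (flipOn {i} y) = hammingDist x y + 1 :=
  hammingDist_flipOn_of_eq (by simpa using h)

lemma hammingDist_flipOn_singleton_of_ne (h : x i ≠ y i) :
    hammingDist x (flipOn {i} y) + 1 = hammingDist x y := by
  have hflip : x i = flipOn {i} y i := by
    rw [flipOn_of_mem (mem_singleton_self i)]
    exact Bool.eq_not.2 h
  rw [← hammingDist_flipOn_singleton_of_eq hflip, flipOn_flipOn]

lemma hammingDist_flipOn_self (s : Finset ι) (x : ι → Bool) :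
    hammingDist x (flipOn s x) = #s := by
  rw [hammingDist_flipOn_of_eq fun _ _ => rfl, hammingDist_self, zero_add]

omit [DecidableEq ι] in
lemma exists_hammingDist_eq_hammingDist_eq_of_hammingDist_eq_two (hp : 1 ≤ p)
    (hcard : p + 2 ≤ Fintype.card ι) (hxy : hammingDist x y = 2) (hi : x i = y i) :
    ∃ z : ι → Bool, z i = x i ∧ hammingDist x z = p ∧ hammingDist y z = p := by
  classical
  obtain ⟨j, hj⟩ := Function.ne_iff.1 (hammingDist_ne_zero.1 (by omega : hammingDist x y ≠ 0))
  let agree : Finset ι := {l | x l = y l}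
  have hagree : #agree + 2 = Fintype.card ι := hxy ▸ card_filter_eq_add_hammingDist x y
  have hp_agree : p - 1 ≤ #(agree.erase i) := by
    rw [card_erase_of_mem (by simpa [agree] using hi)]
    exact Nat.sub_le_sub_right (Nat.le_of_add_le_add_right (hcard.trans_eq hagree.symm)) 1
  obtain ⟨t, ht, htcard⟩ := exists_subset_card_eq hp_agree
  have hxy_t : ∀ l ∈ t, x l = y l := fun l hl => (mem_filter.1 (mem_of_mem_erase (ht hl))).2
  have hit : i ∉ t := fun hit => notMem_erase i agree (ht hit)
  have hjt : j ∉ t := fun hjt => hj (hxy_t j hjt)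
  have hij : i ∉ ({j} : Finset ι) := by
    rw [mem_singleton]
    rintro rfl
    exact hj hi
  -- Flipping `t` moves away from both `x` and `y`; flipping `j` then makes the distances equal.
  refine ⟨flipOn {j} (flipOn t x), ?_, ?_, ?_⟩
  · rw [flipOn_of_notMem hij, flipOn_of_notMem hit]
  · rw [hammingDist_flipOn_singleton_of_eq (flipOn_of_notMem hjt).symm, hammingDist_flipOn_self]
    omega
  · have hyj : y j ≠ flipOn t x j := by rwa [flipOn_of_notMem hjt, ne_comm]
    have hy := hammingDist_flipOn_singleton_of_ne hyj
    rw [hammingDist_flipOn_of_eq fun l hl => (hxy_t l hl).symm, hammingDist_comm y x] at hy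
    omega

end Flip

section CommonBall

variable {ι : Type*} [Fintype ι] [DecidableEq ι] {p : ℕ} {i : ι} {x y x' y' : ι → Bool}

lemma sum_eq_sum_filter_add_flipOn {M : Type*} [AddCommMonoid M] (i : ι) (b : Bool)
    (f : (ι → Bool) → M) : ∑ z, f z = ∑ z with z i = b, (f z + f (flipOn {i} z)) := by
  rw [← sum_filter_add_sum_filter_not univ (fun z : ι → Bool => z i = b), sum_add_distrib]
  congr 1
  exact sum_nbij' (flipOn {i}) (flipOn {i}) (by simp +contextual [flipOn, Bool.eq_not])
    (by simp [flipOn]) (by simp) (by simp) (by simp)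

-- Pair each `z` in the half cube `z i = x i`, at distances `a` and `b` from `x` and `y`, with
-- its flip: in terms of `A = [a ≤ p]`, `A' = [a < p]`, `B = [b ≤ p]` and `B' = [b < p]`, the two
-- cardinalities count the pair `A B + A' B'` and `A B' + A' B` times; the difference
-- `(A - A') (B - B')` is `[a = p] [b = p]`.
theorem card_commonBall_eq_add (h : x i = y i) :
    #(commonBall p x y) = #(commonBall p x (flipOn {i} y)) +
      #{z : ι → Bool | z i = x i ∧ hammingDist x z = p ∧ hammingDist y z = p} := by
  have hhalf : #{z : ι → Bool | z i = x i ∧ hammingDist x z = p ∧ hammingDist y z = p} =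
      ∑ z with z i = x i, if hammingDist x z = p ∧ hammingDist y z = p then 1 else 0 := by
    rw [← filter_filter, card_filter]
  rw [hhalf, commonBall, commonBall, card_filter, card_filter,
    sum_eq_sum_filter_add_flipOn i (x i), sum_eq_sum_filter_add_flipOn i (x i),
    ← sum_add_distrib]
  refine sum_congr rfl fun z hz => ?_
  have hzx : x i = z i := (mem_filter.1 hz).2.symm
  have hzy : z i = y i := hzx.symm.trans h
  rw [hammingDist_flipOn_singleton_of_eq hzx, hammingDist_flipOn_singleton_of_eq hzy.symm,
    hammingDist_flipOn_flipOn, hammingDist_comm (flipOn {i} y) z,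
    hammingDist_flipOn_singleton_of_eq hzy, hammingDist_comm z y]
  split_ifs <;> omega

theorem card_commonBall_anti (h : hammingDist x y ≤ hammingDist x' y') :
    #(commonBall p x' y') ≤ #(commonBall p x y) := by
  obtain ⟨k, hk⟩ := Nat.exists_eq_add_of_le h
  induction k generalizing y' with
  | zero => exact (card_commonBall_congr hk).le
  | succ k ih =>
    obtain ⟨i, y', hi, rfl⟩ :=
      exists_eq_flipOn_singleton_of_ne (hammingDist_ne_zero.1 (by omega : hammingDist x' y' ≠ 0))
    rw [hammingDist_flipOn_singleton_of_eq hi] at hk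
    calc #(commonBall p x' (flipOn {i} y'))
        ≤ #(commonBall p x' y') := by rw [card_commonBall_eq_add hi]; exact Nat.le_add_right _ _
      _ ≤ #(commonBall p x y) := ih (by omega) (by omega)

theorem card_commonBall_lt_of_hammingDist_eq_two (hp : 1 ≤ p) (hcard : p + 2 ≤ Fintype.card ι)
    (hxy : hammingDist x y = 2) (hxy' : 2 < hammingDist x' y') :
    #(commonBall p x' y') < #(commonBall p x y) := by
  obtain ⟨i, hi⟩ : ∃ i, x i = y i := by
    have := card_filter_eq_add_hammingDist x y
    obtain ⟨i, hi⟩ := card_pos.1 (by omega : 0 < #{i | x i = y i})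
    exact ⟨i, (mem_filter.1 hi).2⟩
  obtain ⟨z, hz⟩ := exists_hammingDist_eq_hammingDist_eq_of_hammingDist_eq_two hp hcard hxy hi
  have hflip := hammingDist_flipOn_singleton_of_eq hi
  calc #(commonBall p x' y')
      ≤ #(commonBall p x (flipOn {i} y)) := card_commonBall_anti (by omega)
    _ < #(commonBall p x y) := by
      rw [card_commonBall_eq_add hi]
      exact Nat.lt_add_of_pos_right (card_pos.2 ⟨z, by simpa using hz⟩)

lemma hammingDist_le_two_iff_card_commonBall_le (hp : 1 ≤ p) (hcard : p + 2 ≤ Fintype.card ι)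
    (hxy : hammingDist x y = 2) :
    hammingDist x' y' ≤ 2 ↔ #(commonBall p x y) ≤ #(commonBall p x' y') :=
  ⟨fun h => card_commonBall_anti (h.trans hxy.ge),
    fun h => not_lt.1 fun h' =>
      h.not_gt (card_commonBall_lt_of_hammingDist_eq_two hp hcard hxy h')⟩

omit [DecidableEq ι] in
lemma exists_hammingDist_eq {k : ℕ} (hk : k ≤ Fintype.card ι) (x : ι → Bool) :
    ∃ y, hammingDist x y = k := by
  classical
  obtain ⟨s, -, hs⟩ := exists_subset_card_eq (hk.trans_eq card_univ.symm)
  exact ⟨flipOn s x, (hammingDist_flipOn_self s x).trans hs⟩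

omit [DecidableEq ι] in
theorem hammingDist_apply_le_two_iff {e : Equiv.Perm (ι → Bool)} (hp : 1 ≤ p)
    (hcard : p + 2 ≤ Fintype.card ι)
    (he : ∀ a b, hammingDist (e a) (e b) ≤ p ↔ hammingDist a b ≤ p) (x y : ι → Bool) :
    hammingDist (e x) (e y) ≤ 2 ↔ hammingDist x y ≤ 2 := by
  classical
  obtain ⟨y₂, h₂⟩ := exists_hammingDist_eq (by omega : 2 ≤ Fintype.card ι) x
  rw [hammingDist_le_two_iff_card_commonBall_le hp hcard h₂, card_commonBall_map e he,
    ← hammingDist_le_two_iff_card_commonBall_le hp hcard h₂]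

end CommonBall

section Graph

variable {n p : ℕ}

lemma hammingDist_le_length {v w : Fin n → Bool} (q : (Q n).Walk v w) :
    hammingDist v w ≤ q.length := by
  induction q with
  | nil => simp
  | @cons u v w h q ih =>
    have huv : hammingDist u v = 1 := h
    rw [SimpleGraph.Walk.length_cons]
    have := hammingDist_triangle u v w
    omega

lemma exists_walk_length_eq_hammingDist (v w : Fin n → Bool) :
    ∃ q : (Q n).Walk v w, q.length = hammingDist v w := by
  induction hk : hammingDist v w generalizing w with
  | zero =>
    obtain rfl := hammingDist_eq_zero.1 hk
    exact ⟨.nil, rfl⟩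
  | succ k ih =>
    obtain ⟨i, u, hi, rfl⟩ :=
      exists_eq_flipOn_singleton_of_ne (hammingDist_ne_zero.1 (by omega : hammingDist v w ≠ 0))
    rw [hammingDist_flipOn_singleton_of_eq hi] at hk
    obtain ⟨q, hq⟩ := ih u (by omega)
    have hadj : (Q n).Adj u (flipOn {i} u) := hammingDist_flipOn_self {i} u
    exact ⟨q.concat hadj, by rw [SimpleGraph.Walk.length_concat, hq]⟩

lemma gpow_adj_iff_hammingDist_le {v w : Fin n → Bool} :
    (gpow (Q n) p).Adj v w ↔ v ≠ w ∧ hammingDist v w ≤ p := by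
  rw [gpow_adj_iff_exists_walk]
  refine and_congr_right fun _ => ⟨fun ⟨q, hq⟩ => (hammingDist_le_length q).trans hq, fun h => ?_⟩
  obtain ⟨q, hq⟩ := exists_walk_length_eq_hammingDist v w
  exact ⟨q, hq.trans_le h⟩

lemma isAuto_gpow_iff_hammingDist_le_iff {π : Equiv.Perm (Fin n → Bool)} :
    IsAuto (gpow (Q n) p) π ↔
      ∀ v w, hammingDist (π v) (π w) ≤ p ↔ hammingDist v w ≤ p := by
  refine forall₂_congr fun v w => ?_
  rw [gpow_adj_iff_hammingDist_le, gpow_adj_iff_hammingDist_le, π.injective.ne_iff]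
  obtain rfl | hvw := eq_or_ne v w
  · simp
  · simp [hvw]

theorem isAuto_gpow_two_of_isAuto_gpow {π : Equiv.Perm (Fin n → Bool)} (hp : 1 ≤ p)
    (hpn : p + 2 ≤ n) (hπ : IsAuto (gpow (Q n) p) π) : IsAuto (gpow (Q n) 2) π := by
  rw [isAuto_gpow_iff_hammingDist_le_iff] at hπ ⊢
  exact hammingDist_apply_le_two_iff hp (by simpa using hpn) hπ

end Graph

end Hypercube

theorem stmt_4 (n p : ℕ) (h1 : 2 < p) (h2 : p < n - 1) (heven : Even p) :
    ∀ π : Equiv.Perm (Fin n → Bool), IsAuto (gpow (Q n) p) π ↔ IsAuto (gpow (Q n) 2) π := by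
  intro π
  refine ⟨Hypercube.isAuto_gpow_two_of_isAuto_gpow (by omega) (by omega), fun hπ => ?_⟩
  obtain ⟨m, rfl⟩ := heven.exists_two_nsmul
  rw [smul_eq_mul, ← gpow_gpow]
  exact hπ.gpow m
end

section
/- For every vertex x = x_1x_2x_3 of AQ_3, let x* = x_1 x̄_2 x̄_3 denote the vertex obtained by flipping the last two coordinates. Then the transposition of the vertex set that swaps x and x* and fixes all other vertices is an automorphism of AQ_3. Equivalently, x and x* are adjacent to precisely the same set of vertices: for every vertex w ∉ {x, x*}, w is adjacent to x if and only if w is adjacent to x*, and moreover x is adjacent to x*. -/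
/-- The `n`-dimensional augmented cube: vertices are `{0,1}^n`; distinct vertices `a`, `b`
are adjacent iff either (1) they differ in exactly one coordinate `l`, or (2) there is an
`l` such that they agree on all coordinates before `l` and differ on all coordinates from
`l` on. -/
def AQ (n : ℕ) : SimpleGraph (Fin n → Bool) where
  Adj a b := (∃ l, a l ≠ b l ∧ ∀ i, i ≠ l → a i = b i) ∨
             (∃ l, (∀ i, i < l → a i = b i) ∧ ∀ i, l ≤ i → a i ≠ b i)
  symm := by
    constructor
    rintro a b (⟨l, h1, h2⟩ | ⟨l, h1, h2⟩)
    · exact Or.inl ⟨l, h1.symm, fun i hi => (h2 i hi).symm⟩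
    · exact Or.inr ⟨l, fun i hi => (h1 i hi).symm, fun i hi => (h2 i hi).symm⟩
  loopless := by
    constructor
    rintro a (⟨l, h1, _⟩ | ⟨l, _, h2⟩)
    · exact h1 rfl
    · exact h2 l le_rfl rfl

/-! Two vertices of `AQ 3` are adjacent iff their difference over `ZMod 2` is one of `100`, `010`,
`001`, `011`, `111`. Together with `000` these differences form a union of cosets of `{000, 011}`,
so flipping the last two coordinates preserves closed neighbourhoods, and swapping two vertices with
equal closed neighbourhoods is an automorphism. -/

theorem isAuto_swap_iff {V : Type*} [DecidableEq V] {G : SimpleGraph V} {x y : V} :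
    IsAuto G (Equiv.swap x y) ↔ ∀ w, w ≠ x → w ≠ y → (G.Adj w x ↔ G.Adj w y) := by
  constructor
  · intro hauto w hwx hwy
    simpa only [Equiv.swap_apply_left, Equiv.swap_apply_of_ne_of_ne hwx hwy] using
      (hauto w x).symm
  · intro htwin
    have adj_swap_iff {w : V} (hwx : w ≠ x) (hwy : w ≠ y) (v : V) :
        G.Adj w (Equiv.swap x y v) ↔ G.Adj w v := by
      rw [Equiv.swap_apply_def]
      split_ifs with hvx hvy
      · rw [hvx, htwin w hwx hwy]
      · rw [hvy, htwin w hwx hwy]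
      · rfl
    intro v w
    by_cases hv : v ≠ x ∧ v ≠ y
    · rw [Equiv.swap_apply_of_ne_of_ne hv.1 hv.2, adj_swap_iff hv.1 hv.2]
    by_cases hw : w ≠ x ∧ w ≠ y
    · rw [Equiv.swap_apply_of_ne_of_ne hw.1 hw.2, G.adj_comm, adj_swap_iff hw.1 hw.2, G.adj_comm]
    have v_eq : v = x ∨ v = y := by tauto
    have w_eq : w = x ∨ w = y := by tauto
    rcases v_eq with rfl | rfl <;> rcases w_eq with rfl | rfl <;> simp [G.adj_comm]

namespace AQ

/-- The vertex obtained from `x` by flipping the coordinate `l` and all later ones. As coordinates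
are numbered from `0`, the vertex `x*` of `AQ 3` is `flipFrom 1 x`. -/
def flipFrom {n : ℕ} (l : Fin n) (x : Fin n → Bool) : Fin n → Bool :=
  fun i => if i < l then x i else !(x i)

theorem adj_flipFrom {n : ℕ} (l : Fin n) (x : Fin n → Bool) : (AQ n).Adj x (flipFrom l x) := by
  refine Or.inr ⟨l, fun i hi => ?_, fun i hi => ?_⟩
  · simp [flipFrom, hi]
  · simp [flipFrom, hi.not_gt]

theorem adj_three_iff {a b : Fin 3 → Bool} :
    (AQ 3).Adj a b ↔ a ≠ b ∧ (a 0 = b 0 ∨ (a 1 = b 1 ↔ a 2 = b 2)) := by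
  have adj_iff_single_or_suffix : (AQ 3).Adj a b ↔
      (a 0 ≠ b 0 ∧ a 1 = b 1 ∧ a 2 = b 2 ∨ a 1 ≠ b 1 ∧ a 0 = b 0 ∧ a 2 = b 2 ∨
        a 2 ≠ b 2 ∧ a 0 = b 0 ∧ a 1 = b 1) ∨
      (a 0 ≠ b 0 ∧ a 1 ≠ b 1 ∧ a 2 ≠ b 2 ∨ a 0 = b 0 ∧ a 1 ≠ b 1 ∧ a 2 ≠ b 2 ∨
        a 0 = b 0 ∧ a 1 = b 1 ∧ a 2 ≠ b 2) := by
    simp [AQ, Fin.exists_fin_succ, Fin.forall_fin_succ, and_or_left, and_assoc]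
  have ne_iff : a ≠ b ↔ ¬(a 0 = b 0 ∧ a 1 = b 1 ∧ a 2 = b 2) := by
    simp [funext_iff, Fin.forall_fin_succ]
  rw [adj_iff_single_or_suffix, ne_iff]
  by_cases h₀ : a 0 = b 0 <;> by_cases h₁ : a 1 = b 1 <;> by_cases h₂ : a 2 = b 2 <;>
    simp [h₀, h₁, h₂]

theorem adj_three_iff_adj_flipFrom_one {w x : Fin 3 → Bool} (hwx : w ≠ x)
    (hwy : w ≠ flipFrom 1 x) : (AQ 3).Adj w x ↔ (AQ 3).Adj w (flipFrom 1 x) := by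
  have flip_zero : flipFrom 1 x 0 = x 0 := rfl
  have flip_one : flipFrom 1 x 1 = !(x 1) := rfl
  have flip_two : flipFrom 1 x 2 = !(x 2) := rfl
  simp only [adj_three_iff, ne_eq, hwx, hwy, not_false_eq_true, true_and, flip_zero, flip_one,
    flip_two, Bool.eq_not, not_iff_not]

end AQ

theorem stmt_11 (x : Fin 3 → Bool) :
    IsAuto (AQ 3) (Equiv.swap x (fun i => if i = 0 then x 0 else !(x i))) ∧
    (AQ 3).Adj x (fun i => if i = 0 then x 0 else !(x i)) ∧
    ∀ w : Fin 3 → Bool, w ≠ x → w ≠ (fun i => if i = 0 then x 0 else !(x i)) →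
      ((AQ 3).Adj w x ↔ (AQ 3).Adj w (fun i => if i = 0 then x 0 else !(x i))) := by
  have flip_eq : (fun i => if i = 0 then x 0 else !(x i)) = AQ.flipFrom 1 x := by
    funext i
    fin_cases i <;> rfl
  rw [flip_eq]
  exact ⟨isAuto_swap_iff.mpr fun _ => AQ.adj_three_iff_adj_flipFrom_one, AQ.adj_flipFrom 1 x,
    fun _ => AQ.adj_three_iff_adj_flipFrom_one⟩
end

section
/- The distinguishing number of the 3-dimensional augmented cube satisfies D(AQ_3) = 3. -/
/-!
The even vertices of `AQ 3` induce `2K₂`, and each of them is adjacent to every odd vertex, so every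
automorphism of this `2K₂` extends by the identity to `AQ 3`. Two colors do not distinguish `2K₂`:
both edges would have to use both colors, and then the edges can be exchanged.

With three colors, color so that the vertices `111` and `011` are recognizable as the only vertices
of their color adjacent to all others of that color. They are then fixed by every color-preserving
automorphism, and each vertex is determined by its color and its adjacencies to these two.
-/

section Distinguishing

variable {V W : Type*} {G : SimpleGraph V} {H : SimpleGraph W}

theorem IsDistinguishing.comp_injective {r s : ℕ} {c : V → Fin r} (hc : IsDistinguishing G c)
    {f : Fin r → Fin s} (hf : f.Injective) : IsDistinguishing G (f ∘ c) :=
  fun π hπ hfc => hc π hπ fun v => hf (hfc v)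

theorem distNum_eq_succ_iff {r : ℕ} :
    distNum G = r + 1 ↔
      (∃ c : V → Fin (r + 1), IsDistinguishing G c) ∧ ∀ c : V → Fin r, ¬ IsDistinguishing G c := by
  rw [← not_exists]
  refine Nat.sInf_upward_closed_eq_succ_iff ?_ r
  rintro k l hkl ⟨c, hc⟩
  exact ⟨_, hc.comp_injective (Fin.castLE_injective hkl)⟩

/-- A set of vertices is a module (homogeneous set) of `G` if no outside vertex tells its members
apart by adjacency. -/
def IsModularSet (G : SimpleGraph V) (M : Set V) : Prop :=
  ∀ v ∈ M, ∀ w ∈ M, ∀ u ∉ M, G.Adj v u ↔ G.Adj w u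

theorem IsAuto.viaEmbedding {π : Equiv.Perm W} (hπ : IsAuto H π) (f : H ↪g G)
    (hf : IsModularSet G (Set.range f)) : IsAuto G (π.viaEmbedding f.toEmbedding) := by
  have apply_mem (x : W) : π.viaEmbedding f.toEmbedding (f x) = f (π x) :=
    π.viaEmbedding_apply f.toEmbedding x
  have apply_notMem {v : V} (hv : v ∉ Set.range f) : π.viaEmbedding f.toEmbedding v = v :=
    π.viaEmbedding_apply_of_notMem f.toEmbedding v hv
  have adj_outside (x : W) {u : V} (hu : u ∉ Set.range f) :
      G.Adj (f (π x)) u ↔ G.Adj (f x) u := hf _ ⟨_, rfl⟩ _ ⟨_, rfl⟩ u hu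
  intro v w
  by_cases hv : v ∈ Set.range f <;> by_cases hw : w ∈ Set.range f
  · obtain ⟨x, rfl⟩ := hv
    obtain ⟨y, rfl⟩ := hw
    simpa only [apply_mem, f.map_adj_iff] using hπ x y
  · obtain ⟨x, rfl⟩ := hv
    rw [apply_mem, apply_notMem hw, adj_outside x hw]
  · obtain ⟨y, rfl⟩ := hw
    rw [apply_mem, apply_notMem hv, G.adj_comm, adj_outside y hv, G.adj_comm]
  · rw [apply_notMem hv, apply_notMem hw]

theorem IsDistinguishing.comp_embedding {r : ℕ} {c : V → Fin r} (hc : IsDistinguishing G c)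
    (f : H ↪g G) (hf : IsModularSet G (Set.range f)) : IsDistinguishing H (c ∘ f) := by
  intro π hπ hcf
  have apply_mem (x : W) : π.viaEmbedding f.toEmbedding (f x) = f (π x) :=
    π.viaEmbedding_apply f.toEmbedding x
  have extension_eq_one : π.viaEmbedding f.toEmbedding = 1 := by
    refine hc _ (hπ.viaEmbedding f hf) fun v => ?_
    by_cases hv : v ∈ Set.range f
    · obtain ⟨x, rfl⟩ := hv
      rw [apply_mem]
      exact hcf x
    · exact congrArg c (π.viaEmbedding_apply_of_notMem f.toEmbedding v hv)
  ext x
  apply f.injective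
  rw [← apply_mem, extension_eq_one, Equiv.Perm.one_apply, Equiv.Perm.one_apply]

theorem IsDistinguishing.injective_of_top {r : ℕ} {c : V → Fin r}
    (hc : IsDistinguishing (⊤ : SimpleGraph V) c) : c.Injective := by
  classical
  intro v w hvw
  have isAuto_swap : IsAuto (⊤ : SimpleGraph V) (Equiv.swap v w) := fun x y => by
    simp only [SimpleGraph.top_adj, (Equiv.swap v w).injective.ne_iff]
  exact Equiv.swap_eq_one_iff.mp (hc _ isAuto_swap (Equiv.apply_swap_eq_self hvw))

end Distinguishing

section DisjointCliques

variable {ι κ : Type*}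

theorem bot_boxProd_top_adj {v w : ι × κ} :
    ((⊥ : SimpleGraph ι) □ (⊤ : SimpleGraph κ)).Adj v w ↔ v ≠ w ∧ v.1 = w.1 := by
  simp only [SimpleGraph.boxProd_adj, SimpleGraph.bot_adj, SimpleGraph.top_adj, ne_eq, Prod.ext_iff]
  tauto

theorem isModularSet_range_boxProdRight (i : ι) :
    IsModularSet ((⊥ : SimpleGraph ι) □ (⊤ : SimpleGraph κ))
      (Set.range (SimpleGraph.boxProdRight (⊥ : SimpleGraph ι) (⊤ : SimpleGraph κ) i)) := by
  rintro _ ⟨x, rfl⟩ _ ⟨y, rfl⟩ ⟨j, z⟩ hu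
  have hij : i ≠ j := by
    rintro rfl
    exact hu ⟨z, rfl⟩
  simp [hij]

/-- `⊥ □ ⊤` is the disjoint union of cliques `{i} × κ`. With at most `#κ` colors each clique uses
every color exactly once, so two cliques can be exchanged along their colors. -/
theorem not_isDistinguishing_bot_boxProd_top [Nontrivial ι] [Nonempty κ] {r : ℕ}
    (hr : r ≤ Nat.card κ) (c : ι × κ → Fin r) :
    ¬ IsDistinguishing ((⊥ : SimpleGraph ι) □ (⊤ : SimpleGraph κ)) c := by
  classical
  intro hc
  have clique_bijective (i : ι) : Function.Bijective fun x => c (i, x) :=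
    (hc.comp_embedding _ (isModularSet_range_boxProdRight i)).injective_of_top
      |>.bijective_of_nat_card_le (by simpa using hr)
  let e : ι × κ ≃ ι × Fin r :=
    Equiv.prodCongrRight fun i => Equiv.ofBijective _ (clique_bijective i)
  obtain ⟨i, j, hij⟩ := exists_pair_ne ι
  let π : Equiv.Perm (ι × κ) :=
    e.trans (((Equiv.swap i j).prodCongr (Equiv.refl (Fin r))).trans e.symm)
  have e_π (v : ι × κ) : e (π v) = (Equiv.swap i j v.1, c v) := e.apply_symm_apply _
  have fst_π (v : ι × κ) : (π v).1 = Equiv.swap i j v.1 := congrArg Prod.fst (e_π v)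
  have color_π (v : ι × κ) : c (π v) = c v := congrArg Prod.snd (e_π v)
  have isAuto_π : IsAuto ((⊥ : SimpleGraph ι) □ (⊤ : SimpleGraph κ)) π := fun v w => by
    simp only [bot_boxProd_top_adj, π.injective.ne_iff, fst_π, (Equiv.swap i j).injective.eq_iff]
  obtain ⟨x⟩ := ‹Nonempty κ›
  have fst_π_eq : (π (i, x)).1 = j := by rw [fst_π, Equiv.swap_apply_left]
  rw [hc π isAuto_π color_π] at fst_π_eq
  exact hij fst_π_eq

end DisjointCliques

section DominatingVertices

variable {V α : Type*} {G : SimpleGraph V} {c : V → α}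

/-- The vertex `v` is adjacent to all other vertices of its color. Automorphisms preserving `c`
preserve this property, so a color class with a single such vertex has a fixed vertex. -/
def DominatesColorClass (G : SimpleGraph V) (c : V → α) (v : V) : Prop :=
  ∀ w, c w = c v → w ≠ v → G.Adj v w

instance [Fintype V] [DecidableEq V] [DecidableEq α] [DecidableRel G.Adj] :
    DecidablePred (DominatesColorClass G c) := fun v =>
  inferInstanceAs (Decidable (∀ w, c w = c v → w ≠ v → G.Adj v w))

theorem DominatesColorClass.apply {v : V} (hv : DominatesColorClass G c v) {π : Equiv.Perm V}
    (hπ : IsAuto G π) (hc : ∀ w, c (π w) = c w) : DominatesColorClass G c (π v) := by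
  intro w hw hne
  obtain ⟨u, rfl⟩ := π.surjective w
  rw [hc, hc] at hw
  exact (hπ v u).mpr (hv u hw (ne_of_apply_ne π hne))

theorem isDistinguishing_of_dominatesColorClass_iff {r : ℕ} {c : V → Fin r} {S : Set V}
    (dominates_iff : ∀ s ∈ S, ∀ v, c v = c s → (DominatesColorClass G c v ↔ v = s))
    (separates : ∀ v w, c v = c w → (∀ s ∈ S, G.Adj v s ↔ G.Adj w s) → v = w) :
    IsDistinguishing G c := by
  intro π hπ hc
  have fixes {s : V} (hs : s ∈ S) : π s = s :=
    (dominates_iff s hs (π s) (hc s)).mp (((dominates_iff s hs s rfl).mpr rfl).apply hπ hc)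
  ext v
  refine separates (π v) v (hc v) fun s hs => ?_
  simpa only [fixes hs] using hπ v s

end DominatingVertices

section AQThree

/-- The parity of the number of ones of a vertex of `AQ 3`, with `true` for odd. -/
def parity (v : Fin 3 → Bool) : Bool :=
  v 0 ^^ v 1 ^^ v 2

instance (n : ℕ) : DecidableRel (AQ n).Adj := fun a b =>
  inferInstanceAs (Decidable ((∃ l, a l ≠ b l ∧ ∀ i, i ≠ l → a i = b i) ∨
    ∃ l, (∀ i, i < l → a i = b i) ∧ ∀ i, l ≤ i → a i ≠ b i))

theorem AQ_three_adj_iff :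
    ∀ v w, (AQ 3).Adj v w ↔ v ≠ w ∧ (parity v = parity w → v 0 = w 0) := by
  decide +kernel

theorem AQ_three_adj_of_parity_ne {v w : Fin 3 → Bool} (h : parity v ≠ parity w) :
    (AQ 3).Adj v w :=
  (AQ_three_adj_iff v w).mpr ⟨ne_of_apply_ne parity h, fun h' => absurd h' h⟩

theorem isModularSet_even : IsModularSet (AQ 3) {v | parity v = false} := by
  intro v hv w hw u hu
  have parity_ne {x : Fin 3 → Bool} (hx : parity x = false) : parity x ≠ parity u :=
    fun h => hu (h.symm.trans hx)
  exact iff_of_true (AQ_three_adj_of_parity_ne (parity_ne hv))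
    (AQ_three_adj_of_parity_ne (parity_ne hw))

/-- The even vertex of `AQ 3` with the given first two coordinates. -/
def evenVertex (v : Bool × Bool) : Fin 3 → Bool :=
  ![v.1, v.2, v.1 ^^ v.2]

theorem parity_evenVertex : ∀ v, parity (evenVertex v) = false := by
  decide

theorem evenVertex_injective : evenVertex.Injective := by
  decide

theorem range_evenVertex : Set.range evenVertex = {v | parity v = false} := by
  have exists_iff : ∀ v, (∃ x, evenVertex x = v) ↔ parity v = false := by decide
  exact Set.ext exists_iff

/-- The even vertices of `AQ 3` induce two disjoint edges, indexed by the first coordinate. -/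
def evenVertexEmbedding : ((⊥ : SimpleGraph Bool) □ (⊤ : SimpleGraph Bool)) ↪g AQ 3 where
  toFun := evenVertex
  inj' := evenVertex_injective
  map_rel_iff' {v w} := by
    change (AQ 3).Adj (evenVertex v) (evenVertex w) ↔ _
    rw [AQ_three_adj_iff, bot_boxProd_top_adj, evenVertex_injective.ne_iff, parity_evenVertex,
      parity_evenVertex]
    exact and_congr_right' (forall_prop_of_true rfl)

/-- A distinguishing 3-coloring of `AQ 3`, with color classes `{000, 101, 111}`, `{001, 011, 100}`
and `{010, 110}`. -/
def threeColoring (v : Fin 3 → Bool) : Fin 3 :=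
  if v 1 ∧ ¬ v 2 then 2 else if v 0 = v 2 then 0 else 1

theorem dominatesColorClass_threeColoring_iff :
    ∀ s ∈ ({![true, true, true], ![false, true, true]} : Set (Fin 3 → Bool)), ∀ v,
      threeColoring v = threeColoring s →
        (DominatesColorClass (AQ 3) threeColoring v ↔ v = s) := by
  simp only [Set.forall_mem_insert, Set.mem_singleton_iff, forall_eq]
  decide +kernel

theorem eq_of_threeColoring_eq_of_adj_iff :
    ∀ v w, threeColoring v = threeColoring w →
      (∀ s ∈ ({![true, true, true], ![false, true, true]} : Set (Fin 3 → Bool)),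
        (AQ 3).Adj v s ↔ (AQ 3).Adj w s) → v = w := by
  simp only [Set.forall_mem_insert, Set.mem_singleton_iff, forall_eq]
  decide +kernel

theorem isDistinguishing_threeColoring : IsDistinguishing (AQ 3) threeColoring :=
  isDistinguishing_of_dominatesColorClass_iff dominatesColorClass_threeColoring_iff
    eq_of_threeColoring_eq_of_adj_iff

theorem not_isDistinguishing_AQ_three (c : (Fin 3 → Bool) → Fin 2) :
    ¬ IsDistinguishing (AQ 3) c := by
  intro hc
  have isModularSet_range : IsModularSet (AQ 3) (Set.range evenVertexEmbedding) :=
    range_evenVertex ▸ isModularSet_even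
  exact not_isDistinguishing_bot_boxProd_top (by simp) _
    (hc.comp_embedding evenVertexEmbedding isModularSet_range)

end AQThree

theorem stmt_14 : distNum (AQ 3) = 3 :=
  distNum_eq_succ_iff.mpr
    ⟨⟨threeColoring, isDistinguishing_threeColoring⟩, not_isDistinguishing_AQ_three⟩
end
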